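/- Let d ≥ 2 be an integer, ω = exp(2πi/d), and let q be an integer coprime to d. Let B_0 and B_1 be unitary N×N complex matrices satisfying B_0^d = B_1^d = 𝟙 and the commutation relation B_0 B_1 = ω^q B_1 B_0. Then d divides N, say N = d·t, and there exists an N×N unitary U such that U B_0 U† = Z^q ⊗ 𝟙_t and U B_1 U† = X ⊗ 𝟙_t, where ⊗ is the Kronecker product and 𝟙_t is the t×t identity. -/

import Mathlib

/-!
Write `ζ = ω ^ q`, a primitive `d`-th root of unity. The average
`P = (1/d) ∑ₘ B₀ ^ m` is the orthogonal projection onto the `1`-eigenspace of `B₀`, and the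
commutation relation makes `B₁ ^ j P B₁ᴴ ^ j = (1/d) ∑ₘ ζ ^ (-jm) B₀ ^ m` the projection onto the
`ζ ^ j`-eigenspace, so these conjugates sum to `1` (`sum_conj_fixedProj`).

Factor `P = T Tᴴ` with `Tᴴ T = 1` (`exists_isometry_of_proj`), where `T` has `t = rank P` columns,
and let `V` have the blocks `B₁ ^ j T` for `0 ≤ j < d`. Then `V Vᴴ = 1`, and taking traces gives
`N = d t`; thus `V` is square and hence unitary. By construction `B₀ V = V (Z ^ q ⊗ 1)` and
`B₁ V = V (X ⊗ 1)`, the latter wrapping around because `B₁ ^ d = 1`.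
-/

open Matrix Kronecker

noncomputable section

/-- The `d`-dimensional Heisenberg-Weyl shift matrix `X`, `X e_j = e_{j+1 mod d}`. -/
def Xmat (d : ℕ) : Matrix (Fin d) (Fin d) ℂ :=
  Matrix.of fun i j => if (i : ℕ) = ((j : ℕ) + 1) % d then 1 else 0

/-- The `d`-dimensional Heisenberg-Weyl clock matrix `Z` raised to the integer
power `q`: the diagonal matrix with entries `ω^{q j}`. -/
def ZmatPow (d : ℕ) (ω : ℂ) (q : ℤ) : Matrix (Fin d) (Fin d) ℂ :=
  Matrix.diagonal fun j => ω ^ (q * (j : ℕ))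

/-- A Hermitian idempotent factors through an isometry, whose columns are the eigenvectors of
eigenvalue `1` of an orthonormal eigenbasis. -/
lemma exists_isometry_of_proj {N : ℕ} (P : Matrix (Fin N) (Fin N) ℂ)
    (hP : P.IsHermitian) (hPP : P * P = P) :
    ∃ (t : ℕ) (T : Matrix (Fin N) (Fin t) ℂ), Tᴴ * T = 1 ∧ T * Tᴴ = P := by
  classical
  set E : Matrix (Fin N) (Fin N) ℂ :=
    (hP.eigenvectorUnitary : Matrix (Fin N) (Fin N) ℂ)
  have hEE : Eᴴ * E = 1 := (mem_unitaryGroup_iff'.1 hP.eigenvectorUnitary.2)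
  set l : Fin N → ℂ := fun i => (hP.eigenvalues i : ℂ)
  have hspec : P = E * diagonal l * Eᴴ := by
    have := hP.spectral_theorem
    rw [Unitary.conjStarAlgAut_apply] at this
    exact this
  have hD : diagonal l = Eᴴ * P * E := by
    rw [hspec]
    calc diagonal l = (Eᴴ * E) * diagonal l * (Eᴴ * E) := by rw [hEE]; simp
      _ = _ := by simp only [Matrix.mul_assoc]
  have hEE' : E * Eᴴ = 1 := mul_eq_one_comm.1 hEE
  have hDD : diagonal l * diagonal l = diagonal l := by
    rw [hD]
    calc Eᴴ * P * E * (Eᴴ * P * E) = Eᴴ * P * (E * Eᴴ) * P * E := by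
          simp only [Matrix.mul_assoc]
      _ = Eᴴ * (P * P) * E := by rw [hEE']; simp only [Matrix.mul_assoc, Matrix.one_mul]
      _ = _ := by rw [hPP]
  have h01 : ∀ i, l i = if l i = 1 then 1 else 0 := by
    intro i
    have h := congrFun (congrFun hDD i) i
    simp only [diagonal_mul_diagonal, diagonal_apply_eq] at h
    split_ifs with h1
    · exact h1
    · by_contra h0
      exact h1 (mul_left_cancel₀ h0 (by rw [h, mul_one]))
  let f := Fintype.equivFin {i // l i = 1}
  refine ⟨_, E.submatrix id (fun s => (f.symm s : Fin N)), ?_, ?_⟩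
  · ext a b
    have h := congrFun (congrFun hEE (f.symm a)) (f.symm b)
    simp only [mul_apply, conjTranspose_apply, submatrix_apply, id] at h ⊢
    rw [h, one_apply, one_apply]
    simp [Subtype.coe_inj]
  · ext a b
    rw [hspec, mul_apply, mul_apply]
    simp only [conjTranspose_apply, submatrix_apply, id, mul_diagonal]
    rw [Equiv.sum_comp f.symm (fun i => E a i * star (E b i)),
      ← Finset.sum_subtype (Finset.univ.filter fun i => l i = 1) (by simp)
        (fun i => E a i * star (E b i)), Finset.sum_filter]
    refine Finset.sum_congr rfl fun i _ => ?_
    conv_rhs => rw [h01 i]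
    split_ifs <;> simp

/-- The average of the powers of `B`. For a unitary `B` with `B ^ d = 1` it is the orthogonal
projection onto the fixed vectors of `B`. -/
def fixedProj {N : ℕ} (d : ℕ) (B : Matrix (Fin N) (Fin N) ℂ) : Matrix (Fin N) (Fin N) ℂ :=
  (d : ℂ)⁻¹ • ∑ m ∈ Finset.range d, B ^ m

lemma mul_fixedProj {N d : ℕ} (B : Matrix (Fin N) (Fin N) ℂ) (h : B ^ d = 1) :
    B * fixedProj d B = fixedProj d B := by
  unfold fixedProj
  rw [Matrix.mul_smul]
  congr 1
  have := mul_geom_sum B d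
  rw [h, sub_self, sub_mul, one_mul, sub_eq_zero] at this
  exact this

lemma fixedProj_mul_self {N d : ℕ} (hd : d ≠ 0) (B : Matrix (Fin N) (Fin N) ℂ) (h : B ^ d = 1) :
    fixedProj d B * fixedProj d B = fixedProj d B := by
  have hm : ∀ m : ℕ, B ^ m * fixedProj d B = fixedProj d B := by
    intro m
    induction m with
    | zero => simp
    | succ k ih => rw [pow_succ, Matrix.mul_assoc, mul_fixedProj B h, ih]
  conv_lhs => enter [1]; unfold fixedProj
  rw [Matrix.smul_mul, Finset.sum_mul, Finset.sum_congr rfl fun m _ => hm m, Finset.sum_const,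
    Finset.card_range, ← Nat.cast_smul_eq_nsmul ℂ, smul_smul, inv_mul_cancel₀ (by simpa using hd),
    one_smul]

/-- With `P = fixedProj d B`: `Bᴴ` also fixes the range of `P`, so `Pᴴ P = P`, and the left side is
Hermitian. -/
lemma fixedProj_isHermitian {N d : ℕ} (hd : d ≠ 0) (B : Matrix (Fin N) (Fin N) ℂ)
    (hU : Bᴴ * B = 1) (h : B ^ d = 1) : (fixedProj d B).IsHermitian := by
  have h1 : Bᴴ * fixedProj d B = fixedProj d B := by
    conv_lhs => rw [← mul_fixedProj B h, ← Matrix.mul_assoc, hU, Matrix.one_mul]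
  have hm : ∀ m : ℕ, Bᴴ ^ m * fixedProj d B = fixedProj d B := by
    intro m
    induction m with
    | zero => simp
    | succ k ih => rw [pow_succ, Matrix.mul_assoc, h1, ih]
  have key : (fixedProj d B)ᴴ * fixedProj d B = fixedProj d B := by
    conv_lhs => enter [1]; unfold fixedProj
    rw [conjTranspose_smul, conjTranspose_sum, Matrix.smul_mul, Finset.sum_mul]
    simp only [conjTranspose_pow, hm]
    rw [Finset.sum_const, Finset.card_range, ← Nat.cast_smul_eq_nsmul ℂ, smul_smul]
    simp [hd]
  rw [← key]
  exact isHermitian_conjTranspose_mul_self _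

lemma weyl_pow_mul_pow {N : ℕ} {A B : Matrix (Fin N) (Fin N) ℂ} {ζ : ℂ}
    (h : A * B = ζ • (B * A)) (m j : ℕ) :
    A ^ m * B ^ j = ζ ^ (m * j) • (B ^ j * A ^ m) := by
  have h1 : ∀ j : ℕ, A * B ^ j = ζ ^ j • (B ^ j * A) := by
    intro j
    induction j with
    | zero => simp
    | succ k ih =>
      rw [pow_succ, ← Matrix.mul_assoc, ih, Matrix.smul_mul, Matrix.mul_assoc, h, Matrix.mul_smul,
        smul_smul, ← Matrix.mul_assoc, pow_succ]
  induction m with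
  | zero => simp
  | succ k ih =>
    rw [pow_succ', Matrix.mul_assoc, ih, Matrix.mul_smul, ← Matrix.mul_assoc, h1, Matrix.smul_mul,
      smul_smul, Matrix.mul_assoc, ← pow_add]
    congr 2
    ring

/-- The spectral projections of `A`, obtained from the fixed projection by conjugating with the
powers of `B`, resolve the identity. -/
lemma sum_conj_fixedProj {N d : ℕ} (hd : d ≠ 0) {A B : Matrix (Fin N) (Fin N) ℂ} {ζ : ℂ}
    (hζ : IsPrimitiveRoot ζ d) (hB : B * Bᴴ = 1) (h : A * B = ζ • (B * A)) :
    ∑ j ∈ Finset.range d, B ^ j * fixedProj d A * (B ^ j)ᴴ = 1 := by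
  have hBj : ∀ j : ℕ, B ^ j * (B ^ j)ᴴ = 1 := by
    intro j
    induction j with
    | zero => simp
    | succ k ih =>
      rw [conjTranspose_pow, pow_succ, pow_succ', Matrix.mul_assoc, ← Matrix.mul_assoc B, hB,
        Matrix.one_mul, ← conjTranspose_pow, ih]
  have hζ0 : ζ ≠ 0 := hζ.ne_zero hd
  have hc : ∀ j m : ℕ, B ^ j * A ^ m * (B ^ j)ᴴ = ((ζ⁻¹) ^ m) ^ j • A ^ m := by
    intro j m
    have h2 : B ^ j * A ^ m = ((ζ⁻¹) ^ m) ^ j • (A ^ m * B ^ j) := by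
      rw [weyl_pow_mul_pow h, smul_smul, ← pow_mul, ← mul_pow, inv_mul_cancel₀ hζ0, one_pow,
        one_smul]
    rw [h2, Matrix.smul_mul, Matrix.mul_assoc, hBj, Matrix.mul_one]
  simp only [fixedProj, Matrix.mul_smul, Matrix.smul_mul, Finset.mul_sum, Finset.sum_mul, hc]
  rw [← Finset.smul_sum, Finset.sum_comm]
  simp only [← Finset.sum_smul]
  rw [Finset.sum_eq_single 0]
  · simp [smul_smul, hd]
  · intro m hm hm0
    -- a nontrivial `d`-th root of unity has vanishing geometric sum
    have hne : (ζ⁻¹) ^ m ≠ 1 :=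
      hζ.inv.pow_ne_one_of_pos_of_lt hm0 (Finset.mem_range.1 hm)
    rw [geom_sum_eq hne, ← pow_mul, mul_comm m d, pow_mul, hζ.inv.pow_eq_one, one_pow, sub_self,
      zero_div, zero_smul]
  · intro h0
    exact absurd (Finset.mem_range.2 (Nat.pos_of_ne_zero hd)) h0

/-- The block row matrix `(T, B T, …, B ^ (d - 1) T)`. -/
def orbitMat {N t : ℕ} (d : ℕ) (B : Matrix (Fin N) (Fin N) ℂ) (T : Matrix (Fin N) (Fin t) ℂ) :
    Matrix (Fin N) (Fin d × Fin t) ℂ :=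
  Matrix.of fun i p => (B ^ (p.1 : ℕ) * T) i p.2

lemma mul_orbitMat_apply {N t d : ℕ} (A B : Matrix (Fin N) (Fin N) ℂ)
    (T : Matrix (Fin N) (Fin t) ℂ) (i : Fin N) (p : Fin d × Fin t) :
    (A * orbitMat d B T) i p = (A * (B ^ (p.1 : ℕ) * T)) i p.2 := by
  simp only [mul_apply, orbitMat, of_apply]

lemma orbitMat_mul_kronecker_one {N t d : ℕ} (B : Matrix (Fin N) (Fin N) ℂ)
    (T : Matrix (Fin N) (Fin t) ℂ) (M : Matrix (Fin d) (Fin d) ℂ) (i : Fin N)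
    (p : Fin d × Fin t) :
    (orbitMat d B T * (M ⊗ₖ (1 : Matrix (Fin t) (Fin t) ℂ))) i p =
      ∑ j : Fin d, (B ^ (j : ℕ) * T) i p.2 * M j p.1 := by
  rw [mul_apply, Fintype.sum_prod_type]
  refine Finset.sum_congr rfl fun j _ => ?_
  rw [Finset.sum_eq_single p.2]
  · simp [orbitMat, kroneckerMap_apply]
  · intro s _ hs
    simp [kroneckerMap_apply, one_apply, hs]
  · simp

lemma orbitMat_mul_conjTranspose {N t d : ℕ} (B : Matrix (Fin N) (Fin N) ℂ)
    (T : Matrix (Fin N) (Fin t) ℂ) :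
    orbitMat d B T * (orbitMat d B T)ᴴ =
      ∑ j ∈ Finset.range d, B ^ j * (T * Tᴴ) * (B ^ j)ᴴ := by
  rw [← Fin.sum_univ_eq_sum_range (fun j => B ^ j * (T * Tᴴ) * (B ^ j)ᴴ)]
  have : ∀ j : ℕ, B ^ j * (T * Tᴴ) * (B ^ j)ᴴ = (B ^ j * T) * (B ^ j * T)ᴴ := by
    intro j
    rw [conjTranspose_mul]
    simp only [Matrix.mul_assoc]
  simp only [this]
  ext a b
  rw [mul_apply, Fintype.sum_prod_type, Matrix.sum_apply]
  refine Finset.sum_congr rfl fun j _ => ?_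
  rw [mul_apply]
  rfl

/-- two unitaries of order `d` satisfying the Weyl commutation
relation `B_0 B_1 = ω^q B_1 B_0` with `gcd(q,d) = 1` are jointly unitarily
equivalent to `Z^q ⊗ 𝟙_t` and `X ⊗ 𝟙_t`; in particular `d` divides the
dimension. -/
theorem weyl_commutation_structure
    (d : ℕ) (hd : 2 ≤ d) (q : ℤ) (hq : IsCoprime q (d : ℤ))
    (ω : ℂ) (hω : ω = Complex.exp (2 * Real.pi * Complex.I / d))
    (N : ℕ) (B₀ B₁ : Matrix (Fin N) (Fin N) ℂ)
    (hB₀U : B₀ ∈ Matrix.unitaryGroup (Fin N) ℂ)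
    (hB₁U : B₁ ∈ Matrix.unitaryGroup (Fin N) ℂ)
    (hB₀d : B₀ ^ d = 1) (hB₁d : B₁ ^ d = 1)
    (hcomm : B₀ * B₁ = ω ^ q • (B₁ * B₀)) :
    ∃ (t : ℕ) (e : Fin N ≃ Fin d × Fin t) (U : Matrix (Fin N) (Fin N) ℂ),
      N = d * t ∧ U ∈ Matrix.unitaryGroup (Fin N) ℂ ∧
      U * B₀ * Uᴴ =
        (ZmatPow d ω q ⊗ₖ (1 : Matrix (Fin t) (Fin t) ℂ)).submatrix e e ∧
      U * B₁ * Uᴴ =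
        (Xmat d ⊗ₖ (1 : Matrix (Fin t) (Fin t) ℂ)).submatrix e e := by
  have hd0 : d ≠ 0 := by omega
  have hω' : IsPrimitiveRoot ω d := hω ▸ Complex.isPrimitiveRoot_exp d hd0
  have hζ : IsPrimitiveRoot (ω ^ q) d :=
    hω'.zpow_of_gcd_eq_one q (Int.isCoprime_iff_gcd_eq_one.1 hq)
  have hB₀' : B₀ᴴ * B₀ = 1 := mem_unitaryGroup_iff'.1 hB₀U
  have hB₁' : B₁ * B₁ᴴ = 1 := mem_unitaryGroup_iff.1 hB₁U
  obtain ⟨t, T, hTT, hTP⟩ := exists_isometry_of_proj (fixedProj d B₀)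
    (fixedProj_isHermitian hd0 B₀ hB₀' hB₀d) (fixedProj_mul_self hd0 B₀ hB₀d)
  have hB₀T : B₀ * T = T := by
    have hT : T = fixedProj d B₀ * T := by
      rw [← hTP, Matrix.mul_assoc, hTT, Matrix.mul_one]
    rw [hT, ← Matrix.mul_assoc, mul_fixedProj B₀ hB₀d]
  set V := orbitMat d B₁ T with hV
  have hVV : V * Vᴴ = 1 := by
    rw [hV, orbitMat_mul_conjTranspose, hTP, sum_conj_fixedProj hd0 hζ hB₁' hcomm]
  have hN : N = d * t := by
    have hj : ∀ j : ℕ, (B₁ ^ j)ᴴ * B₁ ^ j = 1 := fun j =>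
      mem_unitaryGroup_iff'.1 (pow_mem hB₁U j)
    have h1 : ∀ j : ℕ, trace (B₁ ^ j * (T * Tᴴ) * (B₁ ^ j)ᴴ) = (t : ℂ) := by
      intro j
      rw [trace_mul_comm, ← Matrix.mul_assoc, hj, Matrix.one_mul, trace_mul_comm, hTT]
      simp
    have h2 := congrArg trace hVV
    rw [hV, orbitMat_mul_conjTranspose, trace_sum] at h2
    simp only [h1] at h2
    simp at h2
    exact_mod_cast h2.symm
  let e : Fin N ≃ Fin d × Fin t := (finCongr hN).trans finProdFinEquiv.symm
  have hVV' : Vᴴ * V = 1 := by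
    rw [mul_eq_one_comm_of_equiv e.symm]
    exact hVV
  have hVZ : B₀ * V = V * (ZmatPow d ω q ⊗ₖ (1 : Matrix (Fin t) (Fin t) ℂ)) := by
    ext i p
    rw [hV, mul_orbitMat_apply, orbitMat_mul_kronecker_one]
    have h1 := weyl_pow_mul_pow hcomm 1 p.1
    rw [pow_one, one_mul] at h1
    rw [← Matrix.mul_assoc, h1, Matrix.smul_mul, Matrix.mul_assoc, hB₀T,
      Finset.sum_eq_single p.1]
    · simp [ZmatPow, _root_.zpow_mul, mul_comm]
    · intro j _ hj
      simp [ZmatPow, hj]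
    · simp
  have hVX : B₁ * V = V * (Xmat d ⊗ₖ (1 : Matrix (Fin t) (Fin t) ℂ)) := by
    ext i p
    rw [hV, mul_orbitMat_apply, orbitMat_mul_kronecker_one]
    have hlt : ((p.1 : ℕ) + 1) % d < d := Nat.mod_lt _ (by omega)
    rw [← Matrix.mul_assoc, ← pow_succ', Finset.sum_eq_single ⟨((p.1 : ℕ) + 1) % d, hlt⟩]
    · simp only [Xmat, of_apply, if_true, mul_one]
      rw [← pow_eq_pow_mod _ hB₁d]
    · intro j _ hj
      have : (j : ℕ) ≠ ((p.1 : ℕ) + 1) % d := fun h => hj (Fin.ext h)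
      simp [Xmat, this]
    · simp
  -- both conclusions follow from an intertwining relation `B V = V M`
  have hconj : ∀ (B : Matrix (Fin N) (Fin N) ℂ) (M : Matrix (Fin d × Fin t) (Fin d × Fin t) ℂ),
      B * V = V * M →
      Vᴴ.submatrix e id * B * (Vᴴ.submatrix e id)ᴴ = M.submatrix e e := by
    intro B M h
    have h1 : Vᴴ * B * V = M := by
      rw [Matrix.mul_assoc, h, ← Matrix.mul_assoc, hVV', Matrix.one_mul]
    rw [← h1]
    rw [conjTranspose_submatrix, conjTranspose_conjTranspose]
    rfl
  refine ⟨t, e, Vᴴ.submatrix e id, hN, ?_, hconj _ _ hVZ, hconj _ _ hVX⟩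
  rw [mem_unitaryGroup_iff, star_eq_conjTranspose]
  have := hconj 1 1 (by rw [Matrix.one_mul, Matrix.mul_one])
  rw [Matrix.mul_one] at this
  rw [this]
  simp

end
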